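/- Let P be a normal consensus matrix with minimum and maximum nonzero entries p_min, p_max and maximum in-degree δ_in (excluding self-loops) in its directed graph. Then (1/(p_max² f(δ_in))) R̄(G(P)) ≤ J(P) ≤ (1/p_min²) R̄(G(P)), where f(δ) = 4δ² + 2δ − 2. -/

import Mathlib

open Matrix

/-- A consensus matrix: entrywise nonnegative, row-stochastic, irreducible
(for every pair of indices some power has a positive entry), with positive diagonal. -/
def IsConsensus {n : ℕ} (P : Matrix (Fin n) (Fin n) ℝ) : Prop :=
  (∀ i j, 0 ≤ P i j) ∧ (∀ i, (∑ j, P i j) = 1) ∧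
  (∀ i j, ∃ k : ℕ, 0 < (P ^ k) i j) ∧ (∀ i, 0 < P i i)

/-- `mu` is the invariant measure of `P`: strictly positive, sums to `1`,
and is a left fixed vector of `P`. -/
def IsInvMeasure {n : ℕ} (P : Matrix (Fin n) (Fin n) ℝ) (mu : Fin n → ℝ) : Prop :=
  (∀ i, 0 < mu i) ∧ (∑ i, mu i) = 1 ∧ (∀ j, (∑ i, mu i * P i j) = mu j)

/-- The time reversal `P* = Π⁻¹ Pᵀ Π` with `Π = diag(mu)`. -/
noncomputable def Pstar {n : ℕ} (P : Matrix (Fin n) (Fin n) ℝ) (mu : Fin n → ℝ) :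
    Matrix (Fin n) (Fin n) ℝ :=
  Matrix.diagonal (fun i => (mu i)⁻¹) * Pᵀ * Matrix.diagonal mu

/-- The graph Laplacian `L(C) = diag(C 𝟙) − C`. -/
def lap {n : ℕ} (C : Matrix (Fin n) (Fin n) ℝ) : Matrix (Fin n) (Fin n) ℝ :=
  Matrix.diagonal (fun i => ∑ j, C i j) - C

/-- A conductance matrix: symmetric, entrywise nonnegative, irreducible. -/
def IsConductance {n : ℕ} (C : Matrix (Fin n) (Fin n) ℝ) : Prop :=
  Cᵀ = C ∧ (∀ i j, 0 ≤ C i j) ∧ (∀ i j, ∃ k : ℕ, 0 < (C ^ k) i j)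

/-- The effective resistance between `a` and `b`: `v a - v b` for a solution `v`
of `L(C) v = e_a - e_b` (junk value `0` if no solution exists). -/
noncomputable def effRes {n : ℕ} (C : Matrix (Fin n) (Fin n) ℝ) (a b : Fin n) : ℝ :=
  open Classical in
  if h : ∃ v : Fin n → ℝ, lap C *ᵥ v = Pi.single a 1 - Pi.single b 1 then
    h.choose a - h.choose b
  else 0

/-- The average effective resistance `(1/(2 n²)) Σ_{u,v} R_{uv}(C)`. -/
noncomputable def avgRes {n : ℕ} (C : Matrix (Fin n) (Fin n) ℝ) : ℝ :=
  (1 / (2 * (n : ℝ) ^ 2)) * ∑ u, ∑ v, effRes C u v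

/-- The unit-conductance matrix of the undirected graph associated with `P`:
edge `{u,v}` iff `P u v ≠ 0` or `P v u ≠ 0`. -/
noncomputable def adjMat {n : ℕ} (P : Matrix (Fin n) (Fin n) ℝ) : Matrix (Fin n) (Fin n) ℝ :=
  Matrix.of fun i j => if i ≠ j ∧ (P i j ≠ 0 ∨ P j i ≠ 0) then (1 : ℝ) else 0

/-- The LQ cost `J(P) = (1/n) Σ_{t≥0} ‖P^t − 𝟙 muᵀ‖_F²`. -/
noncomputable def LQcost {n : ℕ} (P : Matrix (Fin n) (Fin n) ℝ) (mu : Fin n → ℝ) : ℝ :=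
  (1 / (n : ℝ)) *
    ∑' t : ℕ, ∑ i, ∑ j,
      ((P ^ t - Matrix.vecMulVec (fun _ => 1) mu : Matrix (Fin n) (Fin n) ℝ) i j) ^ 2

/-- The weighted LQ cost `J_w(P)`. -/
noncomputable def LQcostW {n : ℕ} (P : Matrix (Fin n) (Fin n) ℝ) (mu : Fin n → ℝ) : ℝ :=
  ∑' t : ℕ, Matrix.trace ((1 - Matrix.vecMulVec mu (fun _ => 1)) * Pᵀ ^ t *
    Matrix.diagonal mu * P ^ t * (1 - Matrix.vecMulVec (fun _ => 1) mu))

/-- The Green matrix `G(P) = Σ_{t≥0} (P^t − 𝟙 muᵀ)`. -/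
noncomputable def Green {n : ℕ} (P : Matrix (Fin n) (Fin n) ℝ) (mu : Fin n → ℝ) :
    Matrix (Fin n) (Fin n) ℝ :=
  ∑' t : ℕ, (P ^ t - Matrix.vecMulVec (fun _ => 1) mu)

/-- Out-degree (excluding self-loops) of node `i` in the directed graph of `P`. -/
noncomputable def outDeg {n : ℕ} (P : Matrix (Fin n) (Fin n) ℝ) (i : Fin n) : ℕ :=
  (Finset.univ.filter fun j => j ≠ i ∧ P i j ≠ 0).card

/-- In-degree (excluding self-loops) of node `j` in the directed graph of `P`. -/
noncomputable def inDeg {n : ℕ} (P : Matrix (Fin n) (Fin n) ℝ) (j : Fin n) : ℕ :=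
  (Finset.univ.filter fun i => i ≠ j ∧ P i j ≠ 0).card

/-!
For a normal consensus matrix `P`, the Laplacian of the conductance matrix `Q = P Pᵀ` is `1 - Q`,
and the summands of the cost are `‖P ^ t - J‖_F² = tr (Q ^ t - J)`, where `J` is the averaging
matrix. A geometric series then gives `n J(P) = tr (lap Q + J)⁻¹ - 1`. The right-hand side is
`n R̄(Q)`, so the cost is exactly the average effective resistance of `Q`.

It remains to compare `Q` with the unit conductances `A` on the same vertices, by Rayleigh
monotonicity. The positive diagonal gives `pmin² A ≤ Q` entrywise. Conversely, a column `p` of `P`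
sums to one, so `∑ p i p j (x i - x j)²` is twice a variance and is at most `2 ∑ p i (x i - x k)²`.
Summing over the columns bounds the energy of `Q` by `2 pmax` times that of `A`. As a column with
in-degree `δ` forces `1 ≤ pmax (δ + 1)`, the factor `2 pmax` is at most `pmax² f(δ)` when `δ ≥ 1`.
-/

section Spectral

open scoped Matrix.Norms.L2Operator ComplexOrder

variable {ι 𝕜 : Type*} [Fintype ι] [DecidableEq ι] [RCLike 𝕜] {A : Matrix ι ι 𝕜}

lemma l2_opNorm_eq_norm_eigenvalues (hA : A.IsHermitian) : ‖A‖ = ‖hA.eigenvalues‖ := by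
  conv_lhs => rw [hA.spectral_theorem]
  rw [Unitary.conjStarAlgAut_apply, ← Unitary.coe_star, CStarRing.norm_mul_coe_unitary,
    CStarRing.norm_coe_unitary_mul, l2_opNorm_diagonal]
  simp [Pi.norm_def, Function.comp_def]

lemma eigenvalues_lt_one (hA : A.IsHermitian) (h : (1 - A).PosDef) (i : ι) :
    hA.eigenvalues i < 1 := by
  set v : ι → 𝕜 := ⇑(hA.eigenvectorBasis i)
  have hv : v ≠ 0 := fun hv =>
    hA.eigenvectorBasis.orthonormal.ne_zero i (by ext j; exact congrFun hv j)
  have hnorm : star v ⬝ᵥ v = 1 := by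
    rw [dotProduct_comm, ← EuclideanSpace.inner_eq_star_dotProduct]
    simp
  have hpos := h.re_dotProduct_pos hv
  rw [sub_mulVec, one_mulVec, dotProduct_sub, map_sub, hnorm, RCLike.one_re,
    ← hA.eigenvalues_eq] at hpos
  exact sub_pos.1 hpos

lemma l2_opNorm_lt_one (hA : A.PosSemidef) (h : (1 - A).PosDef) : ‖A‖ < 1 := by
  rw [l2_opNorm_eq_norm_eigenvalues hA.isHermitian, pi_norm_lt_iff one_pos]
  intro i
  rw [Real.norm_of_nonneg (hA.eigenvalues_nonneg i)]
  exact eigenvalues_lt_one hA.isHermitian h i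

lemma hasSum_trace_pow (hA : A.PosSemidef) (h : (1 - A).PosDef) :
    HasSum (fun t : ℕ => (A ^ t).trace) (1 - A)⁻¹.trace := by
  have hsum := hasSum_geom_series_inverse A (l2_opNorm_lt_one hA h)
  rw [← nonsing_inv_eq_ringInverse] at hsum
  exact hsum.map (traceAddMonoidHom ι 𝕜) continuous_id.matrix_trace

end Spectral

section MatrixPowers

variable {ι R : Type*} [Fintype ι] [DecidableEq ι]

lemma reflTransGen_of_pow_apply_ne_zero [Semiring R] {A : Matrix ι ι R} {k : ℕ} {i j : ι}
    (h : (A ^ k) i j ≠ 0) : Relation.ReflTransGen (fun i j => A i j ≠ 0) i j := by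
  induction k generalizing j with
  | zero =>
    obtain rfl : i = j := by
      by_contra hij
      exact h (by rw [pow_zero, one_apply_ne hij])
    exact .refl
  | succ k ih =>
    rw [pow_succ, mul_apply] at h
    obtain ⟨l, -, hl⟩ := Finset.exists_ne_zero_of_sum_ne_zero h
    exact (ih (left_ne_zero_of_mul hl)).tail (right_ne_zero_of_mul hl)

variable [Semiring R] [PartialOrder R] [IsStrictOrderedRing R]

lemma exists_pow_apply_pos_of_reflTransGen {A : Matrix ι ι R} (hA : ∀ i j, 0 ≤ A i j) {i j : ι}
    (h : Relation.ReflTransGen (fun i j => 0 < A i j) i j) : ∃ k : ℕ, 0 < (A ^ k) i j := by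
  induction h with
  | refl => exact ⟨0, by simp⟩
  | @tail l j _ hlj ih =>
    obtain ⟨k, hk⟩ := ih
    refine ⟨k + 1, ?_⟩
    rw [pow_succ, mul_apply]
    exact Finset.sum_pos' (fun m _ => mul_nonneg (pow_apply_nonneg hA k i m) (hA m j))
      ⟨l, Finset.mem_univ l, mul_pos hk hlj⟩

lemma exists_pow_apply_pos_of_support {A B : Matrix ι ι R} (hB : ∀ i j, 0 ≤ B i j)
    (hAB : ∀ i j, i ≠ j → A i j ≠ 0 → 0 < B i j) {i j : ι} (hA : ∃ k : ℕ, 0 < (A ^ k) i j) :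
    ∃ k : ℕ, 0 < (B ^ k) i j := by
  obtain ⟨k, hk⟩ := hA
  refine exists_pow_apply_pos_of_reflTransGen hB <|
    Relation.reflTransGen_closed (fun a b hab => ?_) i j (reflTransGen_of_pow_apply_ne_zero hk.ne')
  obtain rfl | hne := eq_or_ne a b
  · exact .refl
  · exact .single (hAB a b hne hab)

end MatrixPowers

section Averaging

variable (ι : Type*) [Fintype ι]

/-- The averaging matrix `J = (1/n) 𝟙 𝟙ᵀ`, the orthogonal projection onto constant vectors. -/
noncomputable def averagingMatrix : Matrix ι ι ℝ := of fun _ _ => (Fintype.card ι : ℝ)⁻¹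

lemma isSymm_averagingMatrix : (averagingMatrix ι).IsSymm := rfl

lemma trace_averagingMatrix [Nonempty ι] : (averagingMatrix ι).trace = 1 := by
  simp [averagingMatrix, trace]

variable {ι}

lemma averagingMatrix_mulVec (x : ι → ℝ) :
    averagingMatrix ι *ᵥ x = fun _ => (Fintype.card ι : ℝ)⁻¹ * ∑ j, x j := by
  ext
  simp [averagingMatrix, mulVec, dotProduct, Finset.mul_sum]

lemma dotProduct_averagingMatrix_mulVec (x : ι → ℝ) :
    x ⬝ᵥ averagingMatrix ι *ᵥ x = (Fintype.card ι : ℝ)⁻¹ * (∑ i, x i) ^ 2 := by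
  rw [averagingMatrix_mulVec, dotProduct, ← Finset.sum_mul]
  ring

variable [DecidableEq ι] {M : Matrix ι ι ℝ}

lemma mul_averagingMatrix (hM : M ∈ doublyStochastic ℝ ι) :
    M * averagingMatrix ι = averagingMatrix ι := by
  ext i j
  simp only [averagingMatrix, mul_apply, of_apply, ← Finset.sum_mul,
    sum_row_of_mem_doublyStochastic hM, one_mul]

lemma averagingMatrix_mul (hM : M ∈ doublyStochastic ℝ ι) :
    averagingMatrix ι * M = averagingMatrix ι := by
  ext i j
  simp only [averagingMatrix, mul_apply, of_apply, ← Finset.mul_sum,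
    sum_col_of_mem_doublyStochastic hM, mul_one]

lemma averagingMatrix_mem_doublyStochastic [Nonempty ι] :
    averagingMatrix ι ∈ doublyStochastic ℝ ι := by
  rw [mem_doublyStochastic_iff_sum]
  simp [averagingMatrix]

lemma sub_averagingMatrix_pow_succ [Nonempty ι] (hM : M ∈ doublyStochastic ℝ ι) (t : ℕ) :
    (M - averagingMatrix ι) ^ (t + 1) = M ^ (t + 1) - averagingMatrix ι := by
  induction t with
  | zero => simp
  | succ t ih =>
    rw [pow_succ, ih, sub_mul, mul_sub, mul_sub, ← pow_succ, mul_averagingMatrix (pow_mem hM _),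
      averagingMatrix_mul hM, mul_averagingMatrix averagingMatrix_mem_doublyStochastic, sub_self,
      sub_zero]

lemma sub_averagingMatrix_mul_transpose [Nonempty ι] (hM : M ∈ doublyStochastic ℝ ι) :
    (M - averagingMatrix ι) * (M - averagingMatrix ι)ᵀ = M * Mᵀ - averagingMatrix ι := by
  rw [transpose_sub, isSymm_averagingMatrix, sub_mul, mul_sub, mul_sub, mul_averagingMatrix hM,
    averagingMatrix_mul (transpose_mem_doublyStochastic_iff.2 hM),
    mul_averagingMatrix averagingMatrix_mem_doublyStochastic, sub_self, sub_zero]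

lemma sum_sq_pow_sub_averagingMatrix [Nonempty ι] (hM : M ∈ doublyStochastic ℝ ι)
    (hnormal : M * Mᵀ = Mᵀ * M) (t : ℕ) :
    ∑ i, ∑ j, ((M ^ t - averagingMatrix ι) i j) ^ 2 = ((M * Mᵀ) ^ t).trace - 1 := by
  have hpow : M ^ t * (M ^ t)ᵀ = (M * Mᵀ) ^ t := by
    rw [transpose_pow, (show Commute M Mᵀ from hnormal).mul_pow]
  calc ∑ i, ∑ j, ((M ^ t - averagingMatrix ι) i j) ^ 2
      = ((M ^ t - averagingMatrix ι) * (M ^ t - averagingMatrix ι)ᵀ).trace := by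
        simp only [← sum_hadamard_eq, hadamard_apply, sq]
    _ = ((M * Mᵀ) ^ t).trace - 1 := by
        rw [sub_averagingMatrix_mul_transpose (pow_mem hM t), hpow, trace_sub,
          trace_averagingMatrix]

lemma mul_transpose_mem_doublyStochastic (hM : M ∈ doublyStochastic ℝ ι) :
    M * Mᵀ ∈ doublyStochastic ℝ ι :=
  mul_mem hM (transpose_mem_doublyStochastic_iff.2 hM)

lemma hasSum_sum_sq_pow_sub_averagingMatrix [Nonempty ι] (hM : M ∈ doublyStochastic ℝ ι)
    (hnormal : M * Mᵀ = Mᵀ * M) (h : (1 - M * Mᵀ + averagingMatrix ι).PosDef) :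
    HasSum (fun t : ℕ => ∑ i, ∑ j, ((M ^ t - averagingMatrix ι) i j) ^ 2)
      ((1 - M * Mᵀ + averagingMatrix ι)⁻¹.trace - 1) := by
  have hpsd : (M * Mᵀ - averagingMatrix ι).PosSemidef := by
    rw [← sub_averagingMatrix_mul_transpose hM, ← conjTranspose_eq_transpose_of_trivial]
    exact posSemidef_self_mul_conjTranspose _
  rw [sub_add] at h ⊢
  -- `(M Mᵀ - J) ^ t` and `(M Mᵀ) ^ t - J` differ by `J` at `t = 0`, whence the `- 1`.
  convert! (hasSum_trace_pow hpsd h).sub (hasSum_ite_eq (0 : ℕ) (1 : ℝ)) using 2 with t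
  rw [sum_sq_pow_sub_averagingMatrix hM hnormal]
  cases t with
  | zero => simp
  | succ t =>
    rw [sub_averagingMatrix_pow_succ (mul_transpose_mem_doublyStochastic hM), trace_sub,
      trace_averagingMatrix, if_neg t.succ_ne_zero, sub_zero]

end Averaging

lemma conjTranspose_mulVec_eq_self {ι R : Type*} [Fintype ι] [Ring R] [PartialOrder R]
    [StarRing R] [StarOrderedRing R] [NoZeroDivisors R] {N : Matrix ι ι R} {v : ι → R}
    (hN : N * Nᴴ = Nᴴ * N) (hv : N *ᵥ v = v) : Nᴴ *ᵥ v = v := by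
  classical
  have hcomm : (N - 1) * (N - 1)ᴴ = (N - 1)ᴴ * (N - 1) := by
    rw [conjTranspose_sub, conjTranspose_one, sub_mul, mul_sub, mul_sub, hN]
    noncomm_ring
  have hker : (N - 1) *ᵥ v = 0 := by rw [sub_mulVec, one_mulVec, hv, sub_self]
  rw [← conjTranspose_mul_self_mulVec_eq_zero, ← hcomm, self_mul_conjTranspose_mulVec_eq_zero,
    conjTranspose_sub, conjTranspose_one, sub_mulVec, one_mulVec] at hker
  exact sub_eq_zero.1 hker

section Laplacian

variable {n : ℕ} {C D : Matrix (Fin n) (Fin n) ℝ}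

/-- The Dirichlet energy `½ ∑ C i j (x i - x j)²`. For symmetric `C` it is the quadratic form of
`lap C`; it is also used for matrices that are not symmetric. -/
noncomputable def dirichletEnergy (C : Matrix (Fin n) (Fin n) ℝ) (x : Fin n → ℝ) : ℝ :=
  1 / 2 * ∑ i, ∑ j, C i j * (x i - x j) ^ 2

lemma lap_mulVec_apply (C : Matrix (Fin n) (Fin n) ℝ) (x : Fin n → ℝ) (i : Fin n) :
    (lap C *ᵥ x) i = ∑ j, C i j * (x i - x j) := by
  simp only [lap, sub_mulVec, Pi.sub_apply, mulVec_diagonal]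
  simp only [mulVec, dotProduct, mul_sub, Finset.sum_sub_distrib, Finset.sum_mul]

lemma isSymm_lap (hC : C.IsSymm) : (lap C).IsSymm :=
  (isSymm_diagonal _).sub hC

lemma dotProduct_lap_mulVec_comm (hC : C.IsSymm) (x y : Fin n → ℝ) :
    x ⬝ᵥ lap C *ᵥ y = y ⬝ᵥ lap C *ᵥ x := by
  rw [dotProduct_mulVec, ← mulVec_transpose, isSymm_lap hC, dotProduct_comm]

lemma dotProduct_lap_mulVec (hC : C.IsSymm) (x : Fin n → ℝ) :
    x ⬝ᵥ lap C *ᵥ x = dirichletEnergy C x := by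
  have hrow : x ⬝ᵥ lap C *ᵥ x = ∑ i, ∑ j, C i j * ((x i - x j) * x i) := by
    simp only [dotProduct, lap_mulVec_apply, Finset.mul_sum]
    exact Finset.sum_congr rfl fun i _ => Finset.sum_congr rfl fun j _ => by ring
  have hcol : x ⬝ᵥ lap C *ᵥ x = ∑ i, ∑ j, C i j * ((x j - x i) * x j) := by
    rw [hrow, Finset.sum_comm]
    exact Finset.sum_congr rfl fun i _ => Finset.sum_congr rfl fun j _ => by rw [hC.apply i j]
  have hadd : ∑ i, ∑ j, C i j * (x i - x j) ^ 2 = x ⬝ᵥ lap C *ᵥ x + x ⬝ᵥ lap C *ᵥ x := by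
    nth_rw 1 [hrow]
    rw [hcol]
    simp only [← Finset.sum_add_distrib]
    exact Finset.sum_congr rfl fun i _ => Finset.sum_congr rfl fun j _ => by ring
  rw [dirichletEnergy, hadd]
  ring

lemma dirichletEnergy_nonneg (hC : ∀ i j, 0 ≤ C i j) (x : Fin n → ℝ) :
    0 ≤ dirichletEnergy C x :=
  mul_nonneg (by norm_num) <| Finset.sum_nonneg fun i _ => Finset.sum_nonneg fun j _ =>
    mul_nonneg (hC i j) (sq_nonneg _)

lemma dirichletEnergy_le_mul {c : ℝ} (h : ∀ i j, i ≠ j → C i j ≤ c * D i j) (x : Fin n → ℝ) :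
    dirichletEnergy C x ≤ c * dirichletEnergy D x := by
  rw [dirichletEnergy, dirichletEnergy, mul_left_comm]
  simp only [Finset.mul_sum _ _ c]
  gcongr 1 / 2 * ∑ i, ∑ j, ?_ with i _ j _
  rw [← mul_assoc]
  obtain rfl | hij := eq_or_ne i j
  · simp
  · exact mul_le_mul_of_nonneg_right (h i j hij) (sq_nonneg _)

lemma lap_eq_one_sub (hrow : ∀ i, ∑ j, C i j = 1) : lap C = 1 - C := by
  simp only [lap, hrow, diagonal_one]

lemma averagingMatrix_mul_lap (hC : C.IsSymm) : averagingMatrix (Fin n) * lap C = 0 := by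
  have hlap : lap C * averagingMatrix (Fin n) = 0 := by
    ext i j
    simpa [mul_apply, averagingMatrix, mulVec, dotProduct] using
      lap_mulVec_apply C (fun _ => (n : ℝ)⁻¹) i
  have htranspose := congrArg transpose hlap
  rwa [transpose_mul, isSymm_lap hC, isSymm_averagingMatrix, transpose_zero] at htranspose

namespace IsConductance

lemma eq_of_dirichletEnergy_eq_zero (hC : IsConductance C) {x : Fin n → ℝ}
    (hx : dirichletEnergy C x = 0) (i j : Fin n) : x i = x j := by
  have hterm : ∀ i j, 0 ≤ C i j * (x i - x j) ^ 2 := fun i j =>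
    mul_nonneg (hC.2.1 i j) (sq_nonneg _)
  have hedge : ∀ i j, C i j ≠ 0 → x i = x j := by
    intro i j hij
    have hsum : ∑ i, ∑ j, C i j * (x i - x j) ^ 2 = 0 := by
      simpa [dirichletEnergy] using hx
    have hrow := (Finset.sum_eq_zero_iff_of_nonneg fun i _ =>
      Finset.sum_nonneg fun j _ => hterm i j).1 hsum i (Finset.mem_univ i)
    have hentry := (Finset.sum_eq_zero_iff_of_nonneg fun j _ => hterm i j).1 hrow j
      (Finset.mem_univ j)
    exact sub_eq_zero.1 (pow_eq_zero_iff two_ne_zero |>.1 ((mul_eq_zero_iff_left hij).1 hentry))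
  have hpath : Relation.ReflTransGen (fun i j => C i j ≠ 0) i j :=
    (hC.2.2 i j).elim fun _ hk => reflTransGen_of_pow_apply_ne_zero hk.ne'
  induction hpath with
  | refl => rfl
  | tail _ hlj ih => exact ih.trans (hedge _ _ hlj)

lemma posDef_lap_add_averagingMatrix (hC : IsConductance C) :
    (lap C + averagingMatrix (Fin n)).PosDef := by
  refine .of_dotProduct_mulVec_pos ?_ fun x hx => ?_
  · exact isHermitian_iff_isSymm.2 ((isSymm_lap hC.1).add (isSymm_averagingMatrix _))
  · rw [star_trivial, add_mulVec, dotProduct_add, dotProduct_lap_mulVec hC.1,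
      dotProduct_averagingMatrix_mulVec, Fintype.card_fin]
    have henergy := dirichletEnergy_nonneg hC.2.1 x
    have hmean : 0 ≤ (n : ℝ)⁻¹ * (∑ i, x i) ^ 2 := by positivity
    refine (add_nonneg henergy hmean).lt_of_ne' fun hzero => hx (funext fun i => ?_)
    obtain ⟨henergy_zero, hmean_zero⟩ := (add_eq_zero_iff_of_nonneg henergy hmean).1 hzero
    have hn : (n : ℝ) ≠ 0 := Nat.cast_ne_zero.2 i.pos.ne'
    have hsum : ∑ j, x j = n * x i := by
      simp [hC.eq_of_dirichletEnergy_eq_zero henergy_zero _ i]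
    simpa [hsum, hn] using hmean_zero

lemma mul_inv_lap_add_averagingMatrix (hC : IsConductance C) :
    (lap C + averagingMatrix (Fin n)) * (lap C + averagingMatrix (Fin n))⁻¹ = 1 :=
  mul_nonsing_inv _ ((isUnit_iff_isUnit_det _).1 hC.posDef_lap_add_averagingMatrix.isUnit)

lemma averagingMatrix_mul_inv [NeZero n] (hC : IsConductance C) :
    averagingMatrix (Fin n) * (lap C + averagingMatrix (Fin n))⁻¹ = averagingMatrix (Fin n) := by
  have h := congrArg (averagingMatrix (Fin n) * ·) hC.mul_inv_lap_add_averagingMatrix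
  simpa only [← mul_assoc, mul_add, averagingMatrix_mul_lap hC.1,
    mul_averagingMatrix averagingMatrix_mem_doublyStochastic, zero_add, mul_one] using h

lemma lap_mul_inv [NeZero n] (hC : IsConductance C) :
    lap C * (lap C + averagingMatrix (Fin n))⁻¹ = 1 - averagingMatrix (Fin n) := by
  rw [eq_sub_iff_add_eq, ← hC.mul_inv_lap_add_averagingMatrix, add_mul, hC.averagingMatrix_mul_inv]

end IsConductance

end Laplacian

section EffectiveResistance

variable {n : ℕ} {C D : Matrix (Fin n) (Fin n) ℝ}

lemma effRes_eq_sub (hC : C.IsSymm) {a b : Fin n} {v : Fin n → ℝ}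
    (hv : lap C *ᵥ v = Pi.single a 1 - Pi.single b 1) : effRes C a b = v a - v b := by
  have hex : ∃ w : Fin n → ℝ, lap C *ᵥ w = Pi.single a 1 - Pi.single b 1 := ⟨v, hv⟩
  have hcomm := dotProduct_lap_mulVec_comm hC hex.choose v
  rw [hv, hex.choose_spec] at hcomm
  rw [effRes, dif_pos hex]
  simpa only [dotProduct_sub, dotProduct_single, mul_one] using hcomm

lemma effRes_eq_dirichletEnergy (hC : C.IsSymm) {a b : Fin n} {v : Fin n → ℝ}
    (hv : lap C *ᵥ v = Pi.single a 1 - Pi.single b 1) :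
    effRes C a b = dirichletEnergy C v := by
  rw [effRes_eq_sub hC hv, ← dotProduct_lap_mulVec hC, hv]
  simp only [dotProduct_sub, dotProduct_single, mul_one]

namespace IsConductance

lemma lap_mulVec_inv_mulVec (hC : IsConductance C) (a b : Fin n) :
    lap C *ᵥ ((lap C + averagingMatrix (Fin n))⁻¹ *ᵥ (Pi.single a 1 - Pi.single b 1)) =
      Pi.single a 1 - Pi.single b 1 := by
  have : NeZero n := ⟨a.pos.ne'⟩
  rw [mulVec_mulVec, hC.lap_mul_inv, sub_mulVec, one_mulVec, averagingMatrix_mulVec]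
  ext i
  simp

lemma effRes_nonneg (hC : IsConductance C) (a b : Fin n) : 0 ≤ effRes C a b := by
  rw [effRes_eq_dirichletEnergy hC.1 (hC.lap_mulVec_inv_mulVec a b)]
  exact dirichletEnergy_nonneg hC.2.1 _

lemma avgRes_nonneg (hC : IsConductance C) : 0 ≤ avgRes C :=
  mul_nonneg (by positivity) <| Finset.sum_nonneg fun a _ => Finset.sum_nonneg fun b _ =>
    hC.effRes_nonneg a b

lemma effRes_le_mul_effRes (hC : IsConductance C) (hD : IsConductance D) {c : ℝ} (hc : 0 < c)
    (h : ∀ x, dirichletEnergy C x ≤ c * dirichletEnergy D x) (a b : Fin n) :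
    effRes D a b ≤ c * effRes C a b := by
  obtain ⟨v, hv⟩ : ∃ v, lap C *ᵥ v = Pi.single a 1 - Pi.single b 1 :=
    ⟨_, hC.lap_mulVec_inv_mulVec a b⟩
  obtain ⟨w, hw⟩ : ∃ w, lap D *ᵥ w = Pi.single a 1 - Pi.single b 1 :=
    ⟨_, hD.lap_mulVec_inv_mulVec a b⟩
  have hcross : w ⬝ᵥ lap C *ᵥ v = effRes D a b := by
    rw [hv, ← hw, dotProduct_lap_mulVec hD.1, effRes_eq_dirichletEnergy hD.1 hw]
  have hexpand : dirichletEnergy C (c • v - w) =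
      c ^ 2 * effRes C a b - 2 * c * effRes D a b + dirichletEnergy C w := by
    rw [effRes_eq_dirichletEnergy hC.1 hv, ← dotProduct_lap_mulVec hC.1,
      ← dotProduct_lap_mulVec hC.1, ← dotProduct_lap_mulVec hC.1, mulVec_sub, mulVec_smul,
      dotProduct_sub, sub_dotProduct, sub_dotProduct, smul_dotProduct, smul_dotProduct,
      dotProduct_smul, dotProduct_smul, dotProduct_lap_mulVec_comm hC.1 v w, hcross]
    simp only [smul_eq_mul]
    ring
  have hw_energy : dirichletEnergy C w ≤ c * effRes D a b :=
    effRes_eq_dirichletEnergy hD.1 hw ▸ h w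
  have hnonneg := dirichletEnergy_nonneg hC.2.1 (c • v - w)
  refine le_of_mul_le_mul_left ?_ hc
  linarith

lemma avgRes_le_mul_avgRes (hC : IsConductance C) (hD : IsConductance D) {c : ℝ} (hc : 0 < c)
    (h : ∀ x, dirichletEnergy C x ≤ c * dirichletEnergy D x) : avgRes D ≤ c * avgRes C := by
  rw [avgRes, avgRes, mul_left_comm]
  simp only [Finset.mul_sum _ _ c]
  gcongr with a _ b _
  exact hC.effRes_le_mul_effRes hD hc h a b

lemma effRes_eq_inv_apply (hC : IsConductance C) (a b : Fin n) :
    effRes C a b = (lap C + averagingMatrix (Fin n))⁻¹ a a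
      - (lap C + averagingMatrix (Fin n))⁻¹ a b - (lap C + averagingMatrix (Fin n))⁻¹ b a
      + (lap C + averagingMatrix (Fin n))⁻¹ b b := by
  rw [effRes_eq_sub hC.1 (hC.lap_mulVec_inv_mulVec a b)]
  simp only [mulVec_sub, mulVec_single_one, Pi.sub_apply, col_apply]
  ring

lemma avgRes_eq_trace [NeZero n] (hC : IsConductance C) :
    avgRes C = 1 / n * ((lap C + averagingMatrix (Fin n))⁻¹.trace - 1) := by
  have hn : (n : ℝ) ≠ 0 := NeZero.ne _
  set K := (lap C + averagingMatrix (Fin n))⁻¹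
  have hcol : ∀ b, ∑ a, K a b = 1 := by
    intro b
    have h : (averagingMatrix (Fin n) * K) 0 b = averagingMatrix (Fin n) 0 b := by
      rw [hC.averagingMatrix_mul_inv]
    simpa [averagingMatrix, mul_apply, ← Finset.mul_sum, hn] using h
  have htotal : ∑ a, ∑ b, K a b = n := Finset.sum_comm.trans (by simp [hcol])
  have hsum : ∑ a, ∑ b, effRes C a b = 2 * n * (K.trace - 1) := by
    simp only [hC.effRes_eq_inv_apply, Finset.sum_add_distrib, Finset.sum_sub_distrib]
    rw [Finset.sum_comm (f := fun a b => K b a), htotal]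
    simp only [Finset.sum_const, Finset.card_univ, Fintype.card_fin, nsmul_eq_mul,
      ← Finset.mul_sum, trace, diag_apply]
    ring
  rw [avgRes, hsum]
  field_simp

end IsConductance

end EffectiveResistance

section Consensus

variable {n : ℕ} {P : Matrix (Fin n) (Fin n) ℝ} {mu : Fin n → ℝ}

namespace IsConsensus

lemma mem_doublyStochastic (hP : IsConsensus P) (hnormal : P * Pᵀ = Pᵀ * P) :
    P ∈ doublyStochastic ℝ (Fin n) := by
  have hone : P *ᵥ 1 = 1 := by
    ext i
    simp [mulVec, dotProduct, hP.2.1]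
  refine _root_.mem_doublyStochastic.2 ⟨hP.1, hone, ?_⟩
  rw [← mulVec_transpose]
  exact conjTranspose_mulVec_eq_self hnormal hone

lemma lap_mul_transpose (hP : IsConsensus P) (hnormal : P * Pᵀ = Pᵀ * P) :
    lap (P * Pᵀ) = 1 - P * Pᵀ :=
  lap_eq_one_sub <| sum_row_of_mem_doublyStochastic <|
    mul_transpose_mem_doublyStochastic (hP.mem_doublyStochastic hnormal)

lemma mul_diag_le_mul_transpose (hP : IsConsensus P) (i j : Fin n) :
    P i j * P j j ≤ (P * Pᵀ) i j :=
  Finset.single_le_sum (f := fun k => P i k * P j k)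
    (fun k _ => mul_nonneg (hP.1 i k) (hP.1 j k)) (Finset.mem_univ j)

lemma isConductance_mul_transpose (hP : IsConsensus P) : IsConductance (P * Pᵀ) := by
  have hnonneg : ∀ i j, 0 ≤ (P * Pᵀ) i j := fun i j =>
    (mul_nonneg (hP.1 i j) (hP.1 j j)).trans (hP.mul_diag_le_mul_transpose i j)
  refine ⟨isSymm_mul_transpose_self P, hnonneg, fun i j =>
    exists_pow_apply_pos_of_support hnonneg (fun a b _ hab => ?_) (hP.2.2.1 i j)⟩
  exact (mul_pos ((hP.1 a b).lt_of_ne' hab) (hP.2.2.2 b)).trans_le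
    (hP.mul_diag_le_mul_transpose a b)

lemma isConductance_adjMat (hP : IsConsensus P) : IsConductance (adjMat P) := by
  have hnonneg : ∀ i j, 0 ≤ adjMat P i j := by
    intro i j
    rw [adjMat, of_apply]
    positivity
  refine ⟨?_, hnonneg, fun i j =>
    exists_pow_apply_pos_of_support hnonneg (fun a b hne hab => ?_) (hP.2.2.1 i j)⟩
  · ext i j
    simp only [adjMat, transpose_apply, of_apply, ne_comm (a := i), or_comm (a := P i j ≠ 0)]
  · simp [adjMat, hne, hab]

lemma sq_mul_adjMat_le_mul_transpose (hP : IsConsensus P) {pmin : ℝ} (hpos : 0 ≤ pmin)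
    (hpmin : ∀ i j, P i j ≠ 0 → pmin ≤ P i j) (i j : Fin n) :
    pmin ^ 2 * adjMat P i j ≤ (P * Pᵀ) i j := by
  have hdirected : ∀ i j, P i j ≠ 0 → pmin ^ 2 ≤ (P * Pᵀ) i j := fun i j hij =>
    calc pmin ^ 2 = pmin * pmin := sq pmin
      _ ≤ P i j * P j j :=
        mul_le_mul (hpmin i j hij) (hpmin j j (hP.2.2.2 j).ne') hpos (hP.1 i j)
      _ ≤ (P * Pᵀ) i j := hP.mul_diag_le_mul_transpose i j
  rw [adjMat, of_apply]
  split_ifs with h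
  · rw [mul_one]
    rcases h.2 with hij | hji
    · exact hdirected i j hij
    · exact (hdirected j i hji).trans_eq ((isSymm_mul_transpose_self P).apply i j)
  · simpa using hP.isConductance_mul_transpose.2.1 i j

end IsConsensus

lemma IsInvMeasure.neZero (hmu : IsInvMeasure P mu) : NeZero n :=
  ⟨by rintro rfl; simpa using hmu.2.1⟩

lemma IsInvMeasure.apply_eq_inv (hmu : IsInvMeasure P mu) (hP : IsConsensus P)
    (hnormal : P * Pᵀ = Pᵀ * P) (i : Fin n) : mu i = (n : ℝ)⁻¹ := by
  have htranspose : Pᵀ *ᵥ mu = mu := by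
    rw [mulVec_transpose]
    exact funext hmu.2.2
  have hright : P *ᵥ mu = mu := conjTranspose_mulVec_eq_self (N := Pᵀ) hnormal.symm htranspose
  have hlap : lap (P * Pᵀ) *ᵥ mu = 0 := by
    rw [hP.lap_mul_transpose hnormal, sub_mulVec, one_mulVec, ← mulVec_mulVec, htranspose, hright,
      sub_self]
  have henergy : dirichletEnergy (P * Pᵀ) mu = 0 := by
    rw [← dotProduct_lap_mulVec (isSymm_mul_transpose_self P), hlap, dotProduct_zero]
  have hconst := hP.isConductance_mul_transpose.eq_of_dirichletEnergy_eq_zero henergy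
  refine eq_inv_of_mul_eq_one_right ?_
  simpa [hconst _ i] using hmu.2.1

lemma IsConsensus.LQcost_eq_avgRes (hP : IsConsensus P) (hmu : IsInvMeasure P mu)
    (hnormal : P * Pᵀ = Pᵀ * P) : LQcost P mu = avgRes (P * Pᵀ) := by
  have := hmu.neZero
  have hds := hP.mem_doublyStochastic hnormal
  have hcond := hP.isConductance_mul_transpose
  have hlap := hP.lap_mul_transpose hnormal
  have hmean : vecMulVec (fun _ => 1) mu = averagingMatrix (Fin n) := by
    ext i j
    simp [vecMulVec_apply, averagingMatrix, hmu.apply_eq_inv hP hnormal]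
  have hposDef := hcond.posDef_lap_add_averagingMatrix
  rw [hlap] at hposDef
  rw [LQcost, hmean, (hasSum_sum_sq_pow_sub_averagingMatrix hds hnormal hposDef).tsum_eq,
    hcond.avgRes_eq_trace, hlap]

lemma sum_sum_mul_sub_sq_le {ι : Type*} [Fintype ι] {p : ι → ℝ} (hp : ∑ i, p i = 1) (x : ι → ℝ)
    (c : ℝ) : ∑ i, ∑ j, p i * p j * (x i - x j) ^ 2 ≤ 2 * ∑ i, p i * (x i - c) ^ 2 := by
  have hexpand : ∑ i, ∑ j, p i * p j * (x i - x j) ^ 2 =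
      2 * ∑ i, p i * (x i - c) ^ 2 - 2 * (∑ i, p i * (x i - c)) ^ 2 := by
    have hterm : ∀ i j, p i * p j * (x i - x j) ^ 2 = p i * (x i - c) ^ 2 * p j
        + p i * (p j * (x j - c) ^ 2) - 2 * (p i * (x i - c)) * (p j * (x j - c)) := by
      intro i j
      ring
    simp only [hterm, Finset.sum_add_distrib, Finset.sum_sub_distrib, ← Finset.mul_sum,
      ← Finset.sum_mul, hp]
    ring
  rw [hexpand]
  exact sub_le_self _ (by positivity)

lemma dirichletEnergy_mul_transpose_le (hcol : ∀ j, ∑ i, P i j = 1) (x : Fin n → ℝ) :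
    dirichletEnergy (P * Pᵀ) x ≤ 2 * dirichletEnergy P x := by
  have hcolumns : ∑ i, ∑ j, (P * Pᵀ) i j * (x i - x j) ^ 2 =
      ∑ k, ∑ i, ∑ j, P i k * P j k * (x i - x j) ^ 2 := by
    simp only [mul_apply, transpose_apply, Finset.sum_mul]
    rw [Finset.sum_congr rfl fun i _ => Finset.sum_comm, Finset.sum_comm]
  calc dirichletEnergy (P * Pᵀ) x
      = 1 / 2 * ∑ k, ∑ i, ∑ j, P i k * P j k * (x i - x j) ^ 2 := by
        rw [dirichletEnergy, hcolumns]
    _ ≤ 1 / 2 * ∑ k, 2 * ∑ i, P i k * (x i - x k) ^ 2 := by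
        gcongr with k
        exact sum_sum_mul_sub_sq_le (hcol k) x (x k)
    _ = 2 * dirichletEnergy P x := by
        rw [dirichletEnergy, ← Finset.mul_sum, Finset.sum_comm]
        ring

lemma dirichletEnergy_le_mul_adjMat {pmax : ℝ} (hpmax : ∀ i j, P i j ≤ pmax) (x : Fin n → ℝ) :
    dirichletEnergy P x ≤ pmax * dirichletEnergy (adjMat P) x := by
  refine dirichletEnergy_le_mul (fun i j hij => ?_) x
  rw [adjMat, of_apply]
  split_ifs with hedge
  · simpa using hpmax i j
  · have hzero : P i j = 0 := by tauto
    simp [hzero]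

lemma dirichletEnergy_mul_transpose_le_mul_adjMat (hcol : ∀ j, ∑ i, P i j = 1) {pmax : ℝ}
    (hpmax : ∀ i j, P i j ≤ pmax) (x : Fin n → ℝ) :
    dirichletEnergy (P * Pᵀ) x ≤ 2 * pmax * dirichletEnergy (adjMat P) x :=
  calc dirichletEnergy (P * Pᵀ) x ≤ 2 * dirichletEnergy P x :=
        dirichletEnergy_mul_transpose_le hcol x
    _ ≤ 2 * (pmax * dirichletEnergy (adjMat P) x) := by
        gcongr
        exact dirichletEnergy_le_mul_adjMat hpmax x
    _ = 2 * pmax * dirichletEnergy (adjMat P) x := (mul_assoc _ _ _).symm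

lemma one_le_mul_inDeg_add_one {j : Fin n} (hcol : ∑ i, P i j = 1) {pmax : ℝ}
    (hpmax : ∀ i, P i j ≤ pmax) : 1 ≤ pmax * (inDeg P j + 1) := by
  have hneighbours : ∑ i with i ≠ j, P i j = ∑ i with i ≠ j ∧ P i j ≠ 0, P i j := by
    rw [← Finset.filter_filter, Finset.sum_filter_ne_zero]
  calc 1 = ∑ i with i ≠ j ∧ P i j ≠ 0, P i j + P j j := by
        rw [← hneighbours, Finset.filter_ne', Finset.sum_erase_add _ _ (Finset.mem_univ j), hcol]
    _ ≤ inDeg P j • pmax + pmax :=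
        add_le_add (Finset.sum_le_card_nsmul _ _ _ fun i _ => hpmax i) (hpmax j)
    _ = pmax * (inDeg P j + 1) := by
        rw [nsmul_eq_mul]
        ring

lemma one_div_sq_mul_le_one_div_two_mul {q : ℝ} {δ : ℕ} (hq : 0 < q) (h : 1 ≤ q * (δ + 1)) :
    1 / (q ^ 2 * (4 * (δ : ℝ) ^ 2 + 2 * δ - 2)) ≤ 1 / (2 * q) := by
  obtain rfl | hδ := Nat.eq_zero_or_pos δ
  · refine (one_div_nonpos.2 ?_).trans (by positivity)
    have hsq := sq_nonneg q
    push_cast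
    linarith
  · have hδ' : (1 : ℝ) ≤ δ := by exact_mod_cast hδ
    refine one_div_le_one_div_of_le (by positivity) ?_
    calc 2 * q = 2 * q * (1 * 1) := by ring
      _ ≤ 2 * q * (q * (δ + 1) * (2 * δ - 1)) := by
        gcongr
        linarith
      _ = q ^ 2 * (4 * (δ : ℝ) ^ 2 + 2 * δ - 2) := by ring

lemma IsConsensus.one_div_sq_mul_inDeg_le (hP : IsConsensus P) (hnormal : P * Pᵀ = Pᵀ * P)
    {pmax : ℝ} (hpmax : ∀ i j, P i j ≤ pmax) (j : Fin n) :
    1 / (pmax ^ 2 * (4 * (inDeg P j : ℝ) ^ 2 + 2 * inDeg P j - 2)) ≤ 1 / (2 * pmax) :=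
  one_div_sq_mul_le_one_div_two_mul ((hP.2.2.2 j).trans_le (hpmax j j)) <|
    one_le_mul_inDeg_add_one
      (sum_col_of_mem_doublyStochastic (hP.mem_doublyStochastic hnormal) j) fun i => hpmax i j

end Consensus

theorem stmt18_general {n : ℕ} (P : Matrix (Fin n) (Fin n) ℝ) (mu : Fin n → ℝ)
    (hP : IsConsensus P) (hmu : IsInvMeasure P mu) (hnormal : P * Pᵀ = Pᵀ * P) {pmin pmax : ℝ}
    (hpos : 0 < pmin) (hpmin : ∀ i j, P i j ≠ 0 → pmin ≤ P i j) (hpmax : ∀ i j, P i j ≤ pmax) :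
    1 / (2 * pmax) * avgRes (adjMat P) ≤ LQcost P mu ∧
      LQcost P mu ≤ 1 / pmin ^ 2 * avgRes (adjMat P) := by
  have hcol := sum_col_of_mem_doublyStochastic (hP.mem_doublyStochastic hnormal)
  have hQ := hP.isConductance_mul_transpose
  have hA := hP.isConductance_adjMat
  rw [hP.LQcost_eq_avgRes hmu hnormal]
  constructor
  · have hpmax_pos : 0 < pmax := by
      have := hmu.neZero
      exact (hP.2.2.2 0).trans_le (hpmax 0 0)
    have hle : avgRes (adjMat P) ≤ 2 * pmax * avgRes (P * Pᵀ) :=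
      hQ.avgRes_le_mul_avgRes hA (by positivity)
        (dirichletEnergy_mul_transpose_le_mul_adjMat hcol hpmax)
    rwa [one_div_mul_eq_div, div_le_iff₀' (by positivity)]
  · refine hA.avgRes_le_mul_avgRes hQ (by positivity) fun x =>
      dirichletEnergy_le_mul (fun i j _ => ?_) x
    rw [one_div_mul_eq_div, le_div_iff₀' (by positivity)]
    exact hP.sq_mul_adjMat_le_mul_transpose hpos.le hpmin i j

/-- For a normal consensus matrix `P`,
`(1/(pmax² f(δ_in))) R̄(G(P)) ≤ J(P) ≤ (1/pmin²) R̄(G(P))` with `f(δ) = 4δ² + 2δ − 2`. -/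
theorem stmt18 {n : ℕ} (P : Matrix (Fin n) (Fin n) ℝ) (mu : Fin n → ℝ)
    (hP : IsConsensus P) (hmu : IsInvMeasure P mu)
    (hnormal : P * Pᵀ = Pᵀ * P)
    (pmin pmax : ℝ) (din : ℕ)
    (hpmin : (∀ i j, P i j ≠ 0 → pmin ≤ P i j) ∧ ∃ i j, P i j ≠ 0 ∧ P i j = pmin)
    (hpmax : (∀ i j, P i j ≤ pmax) ∧ ∃ i j, P i j ≠ 0 ∧ P i j = pmax)
    (hdin : (∀ j, inDeg P j ≤ din) ∧ ∃ j, inDeg P j = din) :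
    (1 / (pmax ^ 2 * (4 * (din : ℝ) ^ 2 + 2 * (din : ℝ) - 2))) * avgRes (adjMat P) ≤
        LQcost P mu ∧
      LQcost P mu ≤ (1 / pmin ^ 2) * avgRes (adjMat P) := by
  obtain ⟨i, j, hij, rfl⟩ := hpmin.2
  obtain ⟨k, rfl⟩ := hdin.2
  obtain ⟨hlower, hupper⟩ :=
    stmt18_general P mu hP hmu hnormal ((hP.1 i j).lt_of_ne' hij) hpmin.1 hpmax.1
  refine ⟨le_trans ?_ hlower, hupper⟩
  exact mul_le_mul_of_nonneg_right (hP.one_div_sq_mul_inDeg_le hnormal hpmax.1 k)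
    hP.isConductance_adjMat.avgRes_nonneg
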